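/- Let x ∈ ℝ^{n_1×…×n_d} and for i = 2,…,d let W_i be tensors (W_d ∈ ℝ^{s_{d-1}×n_d}, W_i ∈ ℝ^{s_{i-1}×n_i×s_i} for 2 ≤ i ≤ d−1) such that each matricization Q_i := M_{{1}}(W_i)^T-type flattening separating the first mode from the rest has orthonormal rows (Q_i Q_i^T = I_{s_{i-1}}). Define b_{d+1} := x, b_i := b_{i+1} contracted with W_i over the matching trailing modes, B_i := M_{{1,…,i-1}}(b_i)^T, and let P_{2..d}(x) := x ∘_{(2,…,d),(2,…,d)} ((W_2∘…∘W_d) ∘_{1,1} (W_2∘…∘W_d)). Then P_{2..d} is an orthogonal projection and ‖x − P_{2..d}(x)‖² = Σ_{i=2}^{d} ‖(I − Q_i^T Q_i) B_{i+1}‖_F², where ‖·‖ denotes the Euclidean (Frobenius) norm. -/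

import Mathlib

open MeasureTheory ProbabilityTheory

/-- The index type for the first `j` modes of an order `d` tensor. -/
def PIdx (d : ℕ) (n : Fin d → ℕ) (j : ℕ) : Type := (k : Fin d) → k.val < j → Fin (n k)

/-- The index type for the modes `j, …, d-1` of an order `d` tensor. -/
def SIdx (d : ℕ) (n : Fin d → ℕ) (j : ℕ) : Type := (k : Fin d) → j ≤ k.val → Fin (n k)

instance (d : ℕ) (n : Fin d → ℕ) (j : ℕ) : Fintype (PIdx d n j) := by
  unfold PIdx; infer_instance

instance (d : ℕ) (n : Fin d → ℕ) (j : ℕ) : Fintype (SIdx d n j) := by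
  unfold SIdx; infer_instance

/-- Append one further index to a prefix-index. -/
def PIdx.snoc {d : ℕ} {n : Fin d → ℕ} {j : ℕ} (i : PIdx d n j) (k0 : Fin d)
    (h : k0.val = j) (μ : Fin (n k0)) : PIdx d n (j + 1) := fun k hk =>
  if hlt : k.val < j then i k hlt
  else
    have hkk : k = k0 := Fin.ext (by omega)
    Fin.cast (congrArg n hkk).symm μ

/-- The chain (tensor train) contraction of the components `W c, …, W (d-1)`:
a tensor with one bond mode of dimension `q c` and the physical modes `c, …, d-1`;
`m` is the number of physical modes, i.e. `c + m = d`. -/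
def chainT (d : ℕ) (n : Fin d → ℕ) (q : ℕ → ℕ)
    (W : (k : ℕ) → (hk : k < d) → Fin (q k) → Fin (n ⟨k, hk⟩) → Fin (q (k + 1)) → ℝ) :
    (m c : ℕ) → c + m = d → Fin (q c) → SIdx d n c → ℝ
  | 0, _, _ => fun _ _ => 1
  | m + 1, c, h => fun α j =>
      have hc : c < d := by omega
      ∑ β : Fin (q (c + 1)),
        W c hc α (j ⟨c, hc⟩ (le_refl c)) β *
          chainT d n q W m (c + 1) (by omega) β (fun k hk => j k (by omega))

/-- Merge a full prefix (taken from `i`) with a suffix index `j`. -/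
def mergeIdx {d : ℕ} {n : Fin d → ℕ} (c : ℕ) (i : ∀ k : Fin d, Fin (n k))
    (j : SIdx d n c) : ∀ k : Fin d, Fin (n k) := fun k =>
  if h : c ≤ k.val then j k h else i k

/-- The orthogonal projection `z ↦ z ∘_{(c+1,…,d),(c+1,…,d)}
`((W_c∘…∘W_{d-1}) ∘_{1,1} (W_c∘…∘W_{d-1}))` (0-based modes `c, …, d-1`). -/
noncomputable def Pmap (d : ℕ) (n : Fin d → ℕ) (q : ℕ → ℕ)
    (W : (k : ℕ) → (hk : k < d) → Fin (q k) → Fin (n ⟨k, hk⟩) → Fin (q (k + 1)) → ℝ)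
    (m c : ℕ) (h : c + m = d) (z : (∀ k : Fin d, Fin (n k)) → ℝ) :
    (∀ k : Fin d, Fin (n k)) → ℝ := fun i =>
  ∑ α : Fin (q c), ∑ j : SIdx d n c,
    z (mergeIdx c i j) * chainT d n q W m c h α j *
      chainT d n q W m c h α (fun k _ => i k)

/-- A tensor train representation of `x` with rank tuple `ρ`. -/
def IsTTRepr (d : ℕ) (n : Fin d → ℕ) (x : (∀ k : Fin d, Fin (n k)) → ℝ)
    (ρ : Fin (d + 1) → ℕ) : Prop :=
  ρ 0 = 1 ∧ ρ (Fin.last d) = 1 ∧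
    ∃ Gc : (k : Fin d) → Fin (n k) → Fin (ρ k.castSucc) → Fin (ρ k.succ) → ℝ,
      ∀ i, x i = ∑ jj : (∀ m : Fin (d + 1), Fin (ρ m)),
        ∏ k : Fin d, Gc k (i k) (jj k.castSucc) (jj k.succ)

/-- `x` has TT-rank at most `(r, …, r)`. -/
def TTRankLe (d : ℕ) (n : Fin d → ℕ) (x : (∀ k : Fin d, Fin (n k)) → ℝ) (r : ℕ) : Prop :=
  ∃ ρ, IsTTRepr d n x ρ ∧ ∀ m : Fin (d + 1), 0 < m.val → m.val < d → ρ m ≤ r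


section Helpers

/-- Split a full index into prefix and suffix. -/
def splitE (d : ℕ) (n : Fin d → ℕ) (c : ℕ) :
    (∀ k : Fin d, Fin (n k)) ≃ PIdx d n c × SIdx d n c where
  toFun i := (fun k _ => i k, fun k _ => i k)
  invFun p := fun k => if h : c ≤ k.val then p.2 k h else p.1 k (by omega)
  left_inv i := by funext k; simp
  right_inv p := by
    refine Prod.ext ?_ ?_
    · funext k hk
      have : ¬ c ≤ k.val := by omega
      simp [this]
    · funext k hk
      simp [hk]

/-- Append an index, as an equivalence. -/
def snocE (d : ℕ) (n : Fin d → ℕ) (k0 : Fin d) :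
    PIdx d n k0.val × Fin (n k0) ≃ PIdx d n (k0.val + 1) where
  toFun p := PIdx.snoc p.1 k0 rfl p.2
  invFun i := (fun k hk => i k (by omega), i k0 (by omega))
  left_inv p := by
    refine Prod.ext ?_ ?_
    · funext k hk
      simp [PIdx.snoc, hk]
    · simp [PIdx.snoc]
  right_inv i := by
    funext k hk
    by_cases h : k.val < k0.val
    · simp [PIdx.snoc, h]
    · obtain rfl : k = k0 := Fin.ext (by omega)
      simp [PIdx.snoc]

/-- Split off the first index of a suffix. -/
def consE (d : ℕ) (n : Fin d → ℕ) (c : ℕ) (hc : c < d) :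
    Fin (n ⟨c, hc⟩) × SIdx d n (c + 1) ≃ SIdx d n c where
  toFun p := fun k hk => if h : c + 1 ≤ k.val then p.2 k h else
    have hkk : k = ⟨c, hc⟩ := Fin.ext (by simp; omega)
    Fin.cast (congrArg n hkk).symm p.1
  invFun j := (j ⟨c, hc⟩ (le_refl c), fun k hk => j k (by omega))
  left_inv p := by
    refine Prod.ext ?_ ?_
    · simp
    · funext k hk
      simp [hk]
  right_inv j := by
    funext k hk
    by_cases h : c + 1 ≤ k.val
    · simp [h]
    · obtain rfl : k = ⟨c, hc⟩ := Fin.ext (by simp; omega)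
      simp

lemma split_cons_snoc (d : ℕ) (n : Fin d → ℕ) (c : ℕ) (hc : c < d) (i : PIdx d n c)
    (μ : Fin (n ⟨c, hc⟩)) (j : SIdx d n (c + 1)) :
    (splitE d n c).symm (i, consE d n c hc (μ, j)) =
      (splitE d n (c + 1)).symm (PIdx.snoc i ⟨c, hc⟩ rfl μ, j) := by
  funext k
  simp only [splitE, consE, PIdx.snoc, Equiv.coe_fn_symm_mk, Equiv.coe_fn_mk]
  by_cases h1 : c + 1 ≤ k.val
  · have h2 : c ≤ k.val := by omega
    simp [h1, h2]
    exact dif_pos h1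
  · by_cases h2 : c ≤ k.val
    · have h3 : ¬ k.val < c := by omega
      simp [h1, h2, h3]
      exact dif_neg h1
    · have h3 : k.val < c := by omega
      simp [h1, h2, h3]

lemma chainT_cons (d : ℕ) (n : Fin d → ℕ) (q : ℕ → ℕ)
    (W : (k : ℕ) → (hk : k < d) → Fin (q k) → Fin (n ⟨k, hk⟩) → Fin (q (k + 1)) → ℝ)
    (m c : ℕ) (h : c + (m + 1) = d) (hc : c < d) (α : Fin (q c)) (μ : Fin (n ⟨c, hc⟩))
    (j : SIdx d n (c + 1)) :
    chainT d n q W (m + 1) c h α (consE d n c hc (μ, j)) =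
      ∑ β, W c hc α μ β * chainT d n q W m (c + 1) (by omega) β j := by
  have h1 := (consE d n c hc).symm_apply_apply (μ, j)
  have h2 := congrArg Prod.fst h1
  have h3 := congrArg Prod.snd h1
  simp only [consE, Equiv.coe_fn_symm_mk] at h2 h3
  rw [chainT]
  refine Finset.sum_congr rfl fun β _ => ?_
  congr 1
  · exact congrArg (fun t => W c hc α t β) h2
  · exact congrArg (fun t => chainT d n q W m (c + 1) (by omega) β t) h3

lemma sum_SIdx_top (d : ℕ) (n : Fin d → ℕ) (f : SIdx d n d → ℝ)
    (j0 : SIdx d n d) : ∑ j, f j = f j0 := by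
  have hs : ∀ a b : SIdx d n d, a = b := by
    intro a b
    funext k hk
    have := k.isLt
    omega
  haveI : Subsingleton (SIdx d n d) := ⟨hs⟩
  exact Fintype.sum_subsingleton f j0

lemma chain_ortho (d : ℕ) (n : Fin d → ℕ) (q : ℕ → ℕ) (hqd : q d = 1)
    (W : (k : ℕ) → (hk : k < d) → Fin (q k) → Fin (n ⟨k, hk⟩) → Fin (q (k + 1)) → ℝ)
    (hOrtho : ∀ k (h1 : 1 ≤ k) (hk : k < d) (α α' : Fin (q k)),
      (∑ μ : Fin (n ⟨k, hk⟩), ∑ β : Fin (q (k + 1)), W k hk α μ β * W k hk α' μ β)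
        = if α = α' then 1 else 0) :
    ∀ (m c : ℕ) (h : c + m = d) (_ : 1 ≤ c) (α α' : Fin (q c)),
      ∑ j, chainT d n q W m c h α j * chainT d n q W m c h α' j = if α = α' then 1 else 0 := by
  intro m
  induction m with
  | zero =>
    intro c h hc α α'
    obtain rfl : c = d := h
    have hα : α = α' := by
      apply Fin.ext
      have := α.isLt
      have := α'.isLt
      omega
    rw [sum_SIdx_top c n _ (fun k hk => absurd k.isLt (by omega))]
    simp [chainT, hα]
  | succ m ih =>
    intro c h hc1 α α'
    have hc : c < d := by omega
    rw [← (consE d n c hc).sum_comp, Fintype.sum_prod_type, ← hOrtho c hc1 hc]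
    refine Finset.sum_congr rfl fun μ _ => ?_
    simp only [chainT_cons, Finset.sum_mul_sum]
    rw [Finset.sum_comm]
    refine Finset.sum_congr rfl fun β _ => ?_
    rw [Finset.sum_comm]
    have : ∀ β', ∑ j, W c hc α μ β * chainT d n q W m (c + 1) (by omega) β j *
        (W c hc α' μ β' * chainT d n q W m (c + 1) (by omega) β' j) =
        W c hc α μ β * W c hc α' μ β' * (if β = β' then 1 else 0) := by
      intro β'
      rw [← ih (c + 1) (by omega) (by omega) β β', Finset.mul_sum]
      refine Finset.sum_congr rfl fun j _ => ?_
      ring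
    simp [this]

lemma C_eq (d : ℕ) (n : Fin d → ℕ) (q : ℕ → ℕ)
    (x : (∀ k : Fin d, Fin (n k)) → ℝ)
    (W : (k : ℕ) → (hk : k < d) → Fin (q k) → Fin (n ⟨k, hk⟩) → Fin (q (k + 1)) → ℝ)
    (C : (m : ℕ) → PIdx d n m → Fin (q m) → ℝ)
    (hCbase : ∀ (i : PIdx d n d) (β : Fin (q d)), C d i β = x (fun k => i k k.isLt))
    (hCrec : ∀ k (h1 : 1 ≤ k) (hk : k < d) (i : PIdx d n k) (α : Fin (q k)),
      C k i α = ∑ μ : Fin (n ⟨k, hk⟩), ∑ β : Fin (q (k + 1)),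
        C (k + 1) (PIdx.snoc i ⟨k, hk⟩ rfl μ) β * W k hk α μ β) :
    ∀ (m c : ℕ) (h : c + m = d) (_ : 1 ≤ c) (i : PIdx d n c) (α : Fin (q c)),
      C c i α = ∑ j, x ((splitE d n c).symm (i, j)) * chainT d n q W m c h α j := by
  intro m
  induction m with
  | zero =>
    intro c h hc i α
    obtain rfl : c = d := h
    rw [sum_SIdx_top c n _ (fun k hk => absurd k.isLt (by omega)), hCbase]
    simp only [chainT, mul_one]
    congr 1
    funext k
    have : ¬ c ≤ k.val := by omega
    simp [splitE, this]
  | succ m ih =>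
    intro c h hc1 i α
    have hc : c < d := by omega
    rw [hCrec c hc1 hc, ← (consE d n c hc).sum_comp, Fintype.sum_prod_type]
    refine Finset.sum_congr rfl fun μ _ => ?_
    simp only [chainT_cons, split_cons_snoc, Finset.mul_sum]
    rw [Finset.sum_comm]
    refine Finset.sum_congr rfl fun β _ => ?_
    rw [ih (c + 1) (by omega) (by omega), Finset.sum_mul]
    refine Finset.sum_congr rfl fun j _ => ?_
    ring

lemma key_norm {B K : Type} [Fintype B] [Fintype K] [DecidableEq K] (T : K → B → ℝ)
    (hT : ∀ α α', ∑ b, T α b * T α' b = if α = α' then 1 else 0) (z : B → ℝ) (c : K → ℝ)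
    (hc : ∀ α, c α = ∑ b, z b * T α b) :
    ∑ b, (z b - ∑ α, T α b * c α) ^ 2 = ∑ b, z b ^ 2 - ∑ α, c α ^ 2 := by
  have h1 : ∑ b, z b * ∑ α, T α b * c α = ∑ α, c α ^ 2 := by
    simp only [Finset.mul_sum]
    rw [Finset.sum_comm]
    refine Finset.sum_congr rfl fun α _ => ?_
    rw [sq]
    nth_rewrite 2 [hc α]
    rw [Finset.sum_mul]
    refine Finset.sum_congr rfl fun b _ => ?_
    ring
  have h2 : ∑ b, (∑ α, T α b * c α) * ∑ α, T α b * c α = ∑ α, c α ^ 2 := by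
    simp only [Finset.sum_mul_sum]
    rw [Finset.sum_comm]
    refine Finset.sum_congr rfl fun α _ => ?_
    rw [Finset.sum_comm]
    have : ∀ α', ∑ b, T α b * c α * (T α' b * c α') =
        c α * c α' * (if α = α' then 1 else 0) := by
      intro α'
      rw [← hT, Finset.mul_sum]
      refine Finset.sum_congr rfl fun b _ => ?_
      ring
    simp [this, sq]
  have h3 : ∀ b, (z b - ∑ α, T α b * c α) ^ 2 = z b ^ 2 - 2 * (z b * ∑ α, T α b * c α)
      + (∑ α, T α b * c α) * ∑ α, T α b * c α := fun b => by ring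
  simp only [h3, Finset.sum_add_distrib, Finset.sum_sub_distrib, ← Finset.mul_sum, h1, h2]
  ring

lemma Pmap_split (d : ℕ) (n : Fin d → ℕ) (q : ℕ → ℕ)
    (W : (k : ℕ) → (hk : k < d) → Fin (q k) → Fin (n ⟨k, hk⟩) → Fin (q (k + 1)) → ℝ)
    (m c : ℕ) (h : c + m = d) (z : (∀ k : Fin d, Fin (n k)) → ℝ)
    (a : PIdx d n c) (b : SIdx d n c) :
    Pmap d n q W m c h z ((splitE d n c).symm (a, b)) =
      ∑ α, chainT d n q W m c h α b *
        ∑ j, z ((splitE d n c).symm (a, j)) * chainT d n q W m c h α j := by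
  have h1 : ∀ j, mergeIdx c ((splitE d n c).symm (a, b)) j = (splitE d n c).symm (a, j) := by
    intro j
    funext k
    by_cases hk : c ≤ k.val <;> simp [mergeIdx, splitE, hk]
  have h2 : (fun k _ => (splitE d n c).symm (a, b) k : SIdx d n c) = b :=
    congrArg Prod.snd ((splitE d n c).apply_symm_apply (a, b))
  unfold Pmap
  refine Finset.sum_congr rfl fun α _ => ?_
  rw [h2, Finset.mul_sum]
  refine Finset.sum_congr rfl fun j _ => ?_
  rw [h1]
  ring

end Helpers

/-- **Error decomposition for nested orthogonal range approximations** (the key identity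
in the proof of the randomized TT-SVD error bound).

Let `W_k ∈ ℝ^{q_k × n_k × q_{k+1}}` (0-based `k = 1, …, d-1`, trailing dummy bond
`q d = 1`) be component tensors whose flattenings `Q_k` (first mode versus the rest) have
orthonormal rows, let `b_{d+1} = x` and let `b_k = b_{k+1} ∘ W_k` be the successively
contracted tensors (`C (k) = b_{k+1}`), and let
`P_{2..d} : z ↦ z ∘_{(2,…,d),(2,…,d)} ((W_2∘…∘W_d) ∘_{1,1} (W_2∘…∘W_d))` be the induced
map.  Then `P_{2..d}` is an orthogonal projection and
`‖x − P_{2..d}(x)‖² = Σ_{i=2}^{d} ‖(I − Q_iᵀ Q_i) B_{i+1}‖²`, where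
`‖(I − Q_kᵀ Q_k) B_{k+1}‖²` is written out entrywise as the squared Frobenius norm of
`b_{k+1}` minus its projection `(b_k) ∘ W_k` onto the span of `W_k`. -/
theorem error_decomposition_nested_range_approx
    (d : ℕ) (hd : 1 ≤ d) (n : Fin d → ℕ) (q : ℕ → ℕ) (hqd : q d = 1)
    (x : (∀ k : Fin d, Fin (n k)) → ℝ)
    (W : (k : ℕ) → (hk : k < d) → Fin (q k) → Fin (n ⟨k, hk⟩) → Fin (q (k + 1)) → ℝ)
    (C : (m : ℕ) → PIdx d n m → Fin (q m) → ℝ)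
    -- the flattenings `Q_k` of the `W_k` have orthonormal rows
    (hOrtho : ∀ k (h1 : 1 ≤ k) (hk : k < d) (α α' : Fin (q k)),
      (∑ μ : Fin (n ⟨k, hk⟩), ∑ β : Fin (q (k + 1)), W k hk α μ β * W k hk α' μ β)
        = if α = α' then 1 else 0)
    -- `b_{d+1} = x`
    (hCbase : ∀ (i : PIdx d n d) (β : Fin (q d)), C d i β = x (fun k => i k k.isLt))
    -- `b_k = b_{k+1} ∘ W_k`
    (hCrec : ∀ k (h1 : 1 ≤ k) (hk : k < d) (i : PIdx d n k) (α : Fin (q k)),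
      C k i α = ∑ μ : Fin (n ⟨k, hk⟩), ∑ β : Fin (q (k + 1)),
        C (k + 1) (PIdx.snoc i ⟨k, hk⟩ rfl μ) β * W k hk α μ β) :
    (∀ (z : (∀ k : Fin d, Fin (n k)) → ℝ) (i : ∀ k : Fin d, Fin (n k)),
        Pmap d n q W (d - 1) 1 (by omega) (Pmap d n q W (d - 1) 1 (by omega) z) i =
          Pmap d n q W (d - 1) 1 (by omega) z i) ∧
      (∀ z y : (∀ k : Fin d, Fin (n k)) → ℝ,
        (∑ i, Pmap d n q W (d - 1) 1 (by omega) z i * y i) =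
          ∑ i, z i * Pmap d n q W (d - 1) 1 (by omega) y i) ∧
      (∑ i, (x i - Pmap d n q W (d - 1) 1 (by omega) x i) ^ 2) =
        ∑ k : Fin d, if h : 1 ≤ k.val then
          (∑ i : PIdx d n k.val, ∑ μ : Fin (n k), ∑ β : Fin (q (k.val + 1)),
            (C (k.val + 1) (PIdx.snoc i k rfl μ) β
              - ∑ α : Fin (q k.val), W k.val k.isLt α μ β * C k.val i α) ^ 2)
        else 0 := by
  have hT := chain_ortho d n q hqd W hOrtho (d - 1) 1 (by omega) le_rfl
  have hC := C_eq d n q x W C hCbase hCrec (d - 1) 1 (by omega) le_rfl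
  refine ⟨?_, ?_, ?_⟩
  · intro z i
    obtain ⟨⟨a, b⟩, rfl⟩ := (splitE d n 1).symm.surjective i
    rw [Pmap_split, Pmap_split]
    refine Finset.sum_congr rfl fun α _ => ?_
    congr 1
    simp only [Pmap_split]
    simp only [Finset.sum_mul]
    rw [Finset.sum_comm]
    have : ∀ α', ∑ j, chainT d n q W (d - 1) 1 (by omega) α' j *
        (∑ j', z ((splitE d n 1).symm (a, j')) * chainT d n q W (d - 1) 1 (by omega) α' j') *
        chainT d n q W (d - 1) 1 (by omega) α j =
        (∑ j', z ((splitE d n 1).symm (a, j')) * chainT d n q W (d - 1) 1 (by omega) α' j') *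
        (if α' = α then 1 else 0) := by
      intro α'
      rw [← hT, Finset.mul_sum]
      refine Finset.sum_congr rfl fun j _ => ?_
      ring
    simp [this]
  · intro z y
    rw [← (splitE d n 1).symm.sum_comp, ← (splitE d n 1).symm.sum_comp,
      Fintype.sum_prod_type, Fintype.sum_prod_type]
    refine Finset.sum_congr rfl fun a _ => ?_
    simp only [Pmap_split, Finset.mul_sum, Finset.sum_mul]
    rw [Finset.sum_comm]
    conv_rhs => rw [Finset.sum_comm]
    refine Finset.sum_congr rfl fun α _ => ?_
    rw [Finset.sum_comm]
    refine Finset.sum_congr rfl fun j _ => ?_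
    refine Finset.sum_congr rfl fun b _ => ?_
    ring
  · have hL : (∑ i, (x i - Pmap d n q W (d - 1) 1 (by omega) x i) ^ 2) =
        (∑ i, x i ^ 2) - ∑ a, ∑ α, C 1 a α ^ 2 := by
      rw [← (splitE d n 1).symm.sum_comp, ← (splitE d n 1).symm.sum_comp,
        Fintype.sum_prod_type, Fintype.sum_prod_type, ← Finset.sum_sub_distrib]
      refine Finset.sum_congr rfl fun a _ => ?_
      rw [← key_norm _ hT (fun b => x ((splitE d n 1).symm (a, b))) (C 1 a) (hC a)]
      refine Finset.sum_congr rfl fun b _ => ?_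
      rw [Pmap_split]
      simp only [hC]
    have hR : ∀ k : Fin d, 1 ≤ k.val →
        (∑ i : PIdx d n k.val, ∑ μ : Fin (n k), ∑ β : Fin (q (k.val + 1)),
            (C (k.val + 1) (PIdx.snoc i k rfl μ) β
              - ∑ α : Fin (q k.val), W k.val k.isLt α μ β * C k.val i α) ^ 2) =
        (∑ a, ∑ β, C (k.val + 1) a β ^ 2) - ∑ a, ∑ α, C k.val a α ^ 2 := by
      intro k hk
      rw [← (snocE d n k).sum_comp, Fintype.sum_prod_type, ← Finset.sum_sub_distrib]
      refine Finset.sum_congr rfl fun a _ => ?_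
      have := key_norm (B := Fin (n k) × Fin (q (k.val + 1)))
        (fun α p => W k.val k.isLt α p.1 p.2)
        (fun α α' => by rw [Fintype.sum_prod_type]; exact hOrtho k.val hk k.isLt α α')
        (fun p => C (k.val + 1) (PIdx.snoc a k rfl p.1) p.2) (C k.val a)
        (fun α => by rw [Fintype.sum_prod_type]; exact hCrec k.val hk k.isLt a α)
      rw [Fintype.sum_prod_type, Fintype.sum_prod_type] at this
      exact this
    have hN : (∑ a, ∑ β, C d a β ^ 2) = ∑ i, x i ^ 2 := by
      have hs : ∀ i : PIdx d n d, ∑ β, C d i β ^ 2 = x (fun k => i k k.isLt) ^ 2 := by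
        intro i
        simp only [hCbase]
        simp [hqd]
      simp only [hs]
      let e : PIdx d n d ≃ (∀ k : Fin d, Fin (n k)) :=
        { toFun := fun i k => i k k.isLt
          invFun := fun i k _ => i k
          left_inv := fun _ => rfl
          right_inv := fun _ => rfl }
      exact e.sum_comp (fun i => x i ^ 2)
    rw [hL, ← hN]
    have hF : ∀ k : Fin d, (if h : 1 ≤ k.val then
          (∑ i : PIdx d n k.val, ∑ μ : Fin (n k), ∑ β : Fin (q (k.val + 1)),
            (C (k.val + 1) (PIdx.snoc i k rfl μ) β
              - ∑ α : Fin (q k.val), W k.val k.isLt α μ β * C k.val i α) ^ 2)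
        else 0) = (fun k : ℕ => if 1 ≤ k then (∑ a, ∑ β, C (k + 1) a β ^ 2)
          - ∑ a, ∑ α, C k a α ^ 2 else 0) k.val := by
      intro k
      by_cases h : 1 ≤ k.val
      · simp only [h, dif_pos, if_pos]
        exact hR k h
      · simp [h]
    rw [Finset.sum_congr rfl fun k _ => hF k]
    rw [Fin.sum_univ_eq_sum_range (fun k : ℕ => if 1 ≤ k then (∑ a, ∑ β, C (k + 1) a β ^ 2)
          - ∑ a, ∑ α, C k a α ^ 2 else 0) d]
    obtain ⟨e, he⟩ : ∃ e, d = e + 1 := ⟨d - 1, by omega⟩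
    have hgen : ∀ (N : ℕ → ℝ) (e : ℕ), ∑ k ∈ Finset.range (e + 1),
        (if 1 ≤ k then N (k + 1) - N k else 0) = N (e + 1) - N 1 := by
      intro N e
      induction e with
      | zero => simp
      | succ e ih => rw [Finset.sum_range_succ, ih]; simp
    have := hgen (fun k => ∑ a, ∑ α, C k a α ^ 2) (d - 1)
    rw [show d - 1 + 1 = d by omega] at this
    exact this.symm
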